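/- Let μ be an algebraic integer such that the field K = ℚ(μ) has degree 6 over ℚ and μ² is totally negative (φ(μ²) is a negative real for every embedding φ : K → ℂ). Set B = −(1/2)·Tr_{K/ℚ}(μ²). Then the absolute value of the discriminant of the power basis (1, μ, μ², μ³, μ⁴, μ⁵) of K over ℚ (equivalently, of the discriminant of the minimal polynomial of μ over ℚ) satisfies |Δ(ℤ[μ])| ≤ (2¹⁸/3¹⁵)·B¹⁵. -/

import Mathlib

open Module

/-!
Since `μ²` is totally negative, every embedding sends `μ` to the imaginary axis, so `K` has no real
places and complex conjugation of embeddings acts on the conjugates of `μ` as negation. Grouping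
the factors of `Δ = ± ∏_{φ ≠ ψ} (φ μ - ψ μ)` by the `r` infinite places gives, with
`x_w = |μ|_w²`, `|Δ| = 4^r · ∏_w x_w · (∏_{v ≠ w} |x_w - x_v|)²`, while `-Tr(μ²) / 2 = ∑_w x_w = B`.
For `r = 3` two applications of AM-GM give `∏_w x_w ≤ (B / 3)³` and
`∏_{v ≠ w} |x_w - x_v| ≤ B⁶ / 108`, hence `|Δ| ≤ (4 / 3⁹) B¹⁵`.
-/

open NumberField ComplexEmbedding

section Inequalities

lemma prod_le_arith_mean_pow_card {ι : Type*} [Fintype ι] {x : ι → ℝ} (hx : ∀ i, 0 ≤ x i) :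
    ∏ i, x i ≤ ((∑ i, x i) / Fintype.card ι) ^ Fintype.card ι := by
  rcases isEmpty_or_nonempty ι with _ | _
  · simp
  have hcard : (0 : ℝ) < Fintype.card ι := by exact_mod_cast Fintype.card_pos
  have amgm := Real.geom_mean_le_arith_mean Finset.univ (fun _ ↦ 1) x
    (fun _ _ ↦ zero_le_one) (by simpa using hcard) (fun i _ ↦ hx i)
  simp only [Real.rpow_one, Finset.sum_const, Finset.card_univ, nsmul_eq_mul, mul_one,
    one_mul] at amgm
  calc ∏ i, x i = ((∏ i, x i) ^ (Fintype.card ι : ℝ)⁻¹) ^ Fintype.card ι :=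
        (Real.rpow_inv_natCast_pow (Finset.prod_nonneg fun i _ ↦ hx i) Fintype.card_ne_zero).symm
    _ ≤ _ := pow_le_pow_left₀ (Real.rpow_nonneg (Finset.prod_nonneg fun i _ ↦ hx i) _) amgm _

lemma sq_mul_mul_sub_le {x y : ℝ} (hx : 0 ≤ x) (hy : 0 ≤ y) :
    (x * y * (x - y)) ^ 2 ≤ (x + y) ^ 6 / 108 := by
  have hxy : 0 ≤ 2 * (x * y) := by positivity
  have amgm := prod_le_arith_mean_pow_card
    (x := (![2 * (x * y), 2 * (x * y), (x - y) ^ 2] : Fin 3 → ℝ))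
    (by simp [Fin.forall_fin_succ, hxy, sq_nonneg])
  simp only [Fin.prod_univ_three, Fin.sum_univ_three, Matrix.cons_val, Fintype.card_fin,
    Nat.succ_eq_add_one, Nat.reduceAdd, Nat.cast_ofNat] at amgm
  calc (x * y * (x - y)) ^ 2 = 2 * (x * y) * (2 * (x * y)) * (x - y) ^ 2 / 4 := by ring
    _ ≤ ((2 * (x * y) + 2 * (x * y) + (x - y) ^ 2) / 3) ^ 3 / 4 := by gcongr
    _ = (x + y) ^ 6 / 108 := by ring

lemma sq_mul_sub_le_of_le {x y z : ℝ} (hz : 0 ≤ z) (hzx : z ≤ x) (hzy : z ≤ y) :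
    ((x - y) * (x - z) * (y - z)) ^ 2 ≤ (x + y + z) ^ 6 / 108 := by
  have hx := hz.trans hzx
  have hy := hz.trans hzy
  have hxz : (x - z) ^ 2 ≤ x ^ 2 := pow_le_pow_left₀ (by linarith) (by linarith) 2
  have hyz : (y - z) ^ 2 ≤ y ^ 2 := pow_le_pow_left₀ (by linarith) (by linarith) 2
  calc ((x - y) * (x - z) * (y - z)) ^ 2 = (x - z) ^ 2 * (y - z) ^ 2 * (x - y) ^ 2 := by ring
    _ ≤ x ^ 2 * y ^ 2 * (x - y) ^ 2 := by gcongr ?_ * ?_ * _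
    _ = (x * y * (x - y)) ^ 2 := by ring
    _ ≤ (x + y) ^ 6 / 108 := sq_mul_mul_sub_le hx hy
    _ ≤ (x + y + z) ^ 6 / 108 := by gcongr ?_ ^ 6 / _; linarith

lemma sq_mul_sub_le {x y z : ℝ} (hx : 0 ≤ x) (hy : 0 ≤ y) (hz : 0 ≤ z) :
    ((x - y) * (x - z) * (y - z)) ^ 2 ≤ (x + y + z) ^ 6 / 108 := by
  obtain ⟨hzx, hzy⟩ | ⟨hyx, hyz⟩ | ⟨hxy, hxz⟩ :
      (z ≤ x ∧ z ≤ y) ∨ (y ≤ x ∧ y ≤ z) ∨ (x ≤ y ∧ x ≤ z) := by grind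
  · exact sq_mul_sub_le_of_le hz hzx hzy
  · convert sq_mul_sub_le_of_le hy hyx hyz using 1 <;> ring
  · convert sq_mul_sub_le_of_le hx hxy hxz using 1 <;> ring

lemma prod_abs_sub_le_of_card_eq_three {ι : Type*} [Fintype ι] [DecidableEq ι]
    (hι : Fintype.card ι = 3) {x : ι → ℝ} (hx : ∀ i, 0 ≤ x i) :
    ∏ i, ∏ j ∈ {i}ᶜ, |x i - x j| ≤ (∑ i, x i) ^ 6 / 108 := by
  obtain ⟨i, j, k, hij, hik, hjk, huniv⟩ := Finset.card_eq_three.mp (Finset.card_univ.trans hι)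
  have hi : ({i}ᶜ : Finset ι) = {j, k} := by rw [Finset.compl_eq_univ_sdiff]; grind
  have hj : ({j}ᶜ : Finset ι) = {i, k} := by rw [Finset.compl_eq_univ_sdiff]; grind
  have hk : ({k}ᶜ : Finset ι) = {i, j} := by rw [Finset.compl_eq_univ_sdiff]; grind
  have hprod : ∏ i, ∏ j ∈ {i}ᶜ, |x i - x j| = ((x i - x j) * (x i - x k) * (x j - x k)) ^ 2 := by
    rw [huniv, Finset.prod_insert (by grind), Finset.prod_pair hjk, hi, hj, hk,
      Finset.prod_pair hjk, Finset.prod_pair hik, Finset.prod_pair hij, abs_sub_comm (x j) (x i),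
      abs_sub_comm (x k) (x i), abs_sub_comm (x k) (x j), ← sq_abs, abs_mul, abs_mul]
    ring
  have hsum : ∑ i, x i = x i + x j + x k := by
    rw [huniv, Finset.sum_insert (by grind), Finset.sum_pair hjk, add_assoc]
  rw [hprod, hsum]
  exact sq_mul_sub_le (hx i) (hx j) (hx k)

end Inequalities

section Discriminant

open Algebra in
lemma algebraMap_discr_pow_eq_prod {F L E : Type*} [Field F] [Field L] [Algebra F L]
    [FiniteDimensional F L] [Algebra.IsSeparable F L] [Field E] [Algebra F E] [IsAlgClosed E]
    {n : ℕ} (e : Fin n ≃ (L →ₐ[F] E)) (x : L) :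
    algebraMap F E (discr F fun i : Fin n ↦ x ^ (i : ℕ)) =
      (∏ i, ∏ j ∈ Finset.Ioi i, (e j x - e i x)) ^ 2 := by
  have hvandermonde : embeddingsMatrixReindex F E (fun i : Fin n ↦ x ^ (i : ℕ)) e =
      (Matrix.vandermonde fun i ↦ e i x).transpose := by
    ext i j
    simp [embeddingsMatrixReindex, embeddingsMatrix, Matrix.vandermonde_apply]
  rw [discr_eq_det_embeddingsMatrixReindex_pow_two F E _ e, hvandermonde, Matrix.det_transpose,
    Matrix.det_vandermonde]

variable {K : Type*} [Field K] [NumberField K]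

open scoped Classical in
lemma abs_discr_pow_eq_prod_norm_sub {n : ℕ} (hn : finrank ℚ K = n) (x : K) :
    ((|Algebra.discr ℚ fun i : Fin n ↦ x ^ (i : ℕ)| : ℚ) : ℝ) =
      ∏ φ : K →+* ℂ, ∏ ψ ∈ {φ}ᶜ, ‖φ x - ψ x‖ := by
  let e : Fin n ≃ (K →+* ℂ) := (Fintype.equivFinOfCardEq ((Embeddings.card K ℂ).trans hn)).symm
  have hdiscr := algebraMap_discr_pow_eq_prod (e.trans (RingHom.equivRatAlgHom K ℂ)) x
  calc ((|Algebra.discr ℚ fun i : Fin n ↦ x ^ (i : ℕ)| : ℚ) : ℝ)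
      = ‖algebraMap ℚ ℂ (Algebra.discr ℚ fun i : Fin n ↦ x ^ (i : ℕ))‖ := by
        simp
    _ = ∏ i, ∏ j ∈ Finset.Ioi i, ‖e j x - e i x‖ * ‖e i x - e j x‖ := by
        rw [hdiscr]
        simp [norm_sub_rev, sq, Finset.prod_mul_distrib]
    _ = ∏ i, ∏ j ∈ {i}ᶜ, ‖e j x - e i x‖ :=
        Finset.prod_prod_Ioi_mul_eq_prod_prod_off_diag fun j i ↦ ‖e j x - e i x‖
    _ = ∏ φ : K →+* ℂ, ∏ ψ ∈ {φ}ᶜ, ‖φ x - ψ x‖ :=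
        Fintype.prod_equiv e _ _ fun i ↦ Finset.prod_equiv e (by simp) fun j _ ↦ norm_sub_rev _ _

end Discriminant

section Places

lemma conjugate_ne {K : Type*} [Field K] [IsTotallyComplex K] (φ : K →+* ℂ) : conjugate φ ≠ φ :=
  fun h ↦ IsTotallyComplex.complexEmbedding_not_isReal φ (isReal_iff.mpr h)

variable {K : Type*} [Field K] [NumberField K]

open scoped Classical in
lemma filter_mk_eq (φ : K →+* ℂ) :
    ({ψ | InfinitePlace.mk ψ = InfinitePlace.mk φ} : Finset (K →+* ℂ)) = {φ, conjugate φ} := by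
  ext ψ
  simp [InfinitePlace.mk_eq_iff, star_eq_iff_star_eq, eq_comm (b := ψ)]

variable [IsTotallyComplex K]

open scoped Classical in
@[to_additive]
lemma prod_filter_mk_eq {M : Type*} [CommMonoid M] (f : (K →+* ℂ) → M) (φ : K →+* ℂ) :
    ∏ ψ with InfinitePlace.mk ψ = InfinitePlace.mk φ, f ψ = f φ * f (conjugate φ) := by
  rw [filter_mk_eq, Finset.prod_pair (conjugate_ne φ).symm]

@[to_additive]
lemma prod_comp_mk {M : Type*} [CommMonoid M] (f : InfinitePlace K → M) :
    ∏ φ : K →+* ℂ, f (InfinitePlace.mk φ) = (∏ w, f w) ^ 2 := by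
  classical
  rw [← Finset.prod_fiberwise Finset.univ InfinitePlace.mk, ← Finset.prod_pow]
  refine Finset.prod_congr rfl fun w _ ↦ ?_
  obtain ⟨φ, rfl⟩ : ∃ φ, InfinitePlace.mk φ = w := ⟨_, InfinitePlace.mk_embedding w⟩
  rw [prod_filter_mk_eq (fun φ ↦ f (InfinitePlace.mk φ)), InfinitePlace.mk_conjugate_eq, sq]

variable (K) in
lemma two_mul_card_infinitePlace : 2 * Fintype.card (InfinitePlace K) = finrank ℚ K := by
  rw [InfinitePlace.card_eq_nrRealPlaces_add_nrComplexPlaces, IsTotallyComplex.nrRealPlaces_eq_zero,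
    zero_add, IsTotallyComplex.finrank]

end Places

/-- `x` is totally negative: its image under every complex embedding is a negative real number. -/
def IsTotallyNegative {K : Type*} [Field K] (x : K) : Prop :=
  ∀ φ : K →+* ℂ, (φ x).im = 0 ∧ (φ x).re < 0

namespace IsTotallyNegative

section Field

variable {K : Type*} [Field K] {μ : K}

lemma re_map_eq_zero (hμ : IsTotallyNegative (μ ^ 2)) (φ : K →+* ℂ) : (φ μ).re = 0 := by
  obtain ⟨him, hre⟩ := hμ φ
  rw [map_pow, sq, Complex.mul_im] at him
  rw [map_pow, sq, Complex.mul_re] at hre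
  have him_ne : (φ μ).im ≠ 0 := by
    intro h
    nlinarith [mul_self_nonneg (φ μ).re]
  have : (φ μ).re * (φ μ).im = 0 := by linarith
  exact (mul_eq_zero.mp this).resolve_right him_ne

lemma conjugate_map (hμ : IsTotallyNegative (μ ^ 2)) (φ : K →+* ℂ) :
    conjugate φ μ = -φ μ := by
  rw [conjugate_coe_eq]
  apply Complex.ext <;> simp [hμ.re_map_eq_zero φ]

lemma sq_map_eq (hμ : IsTotallyNegative (μ ^ 2)) (φ : K →+* ℂ) :
    φ μ ^ 2 = ((-InfinitePlace.mk φ μ ^ 2 : ℝ) : ℂ) := by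
  calc φ μ ^ 2 = -(φ μ * conjugate φ μ) := by rw [hμ.conjugate_map]; ring
    _ = ((-InfinitePlace.mk φ μ ^ 2 : ℝ) : ℂ) := by
      rw [conjugate_coe_eq, Complex.mul_conj', InfinitePlace.apply]
      push_cast
      ring

lemma isTotallyComplex (hμ : IsTotallyNegative (μ ^ 2)) : IsTotallyComplex K := by
  refine ⟨fun w ↦ InfinitePlace.isComplex_iff.mpr fun hreal ↦ ?_⟩
  have hμ0 : w.embedding μ = 0 := by
    have h := hμ.conjugate_map w.embedding
    rw [isReal_iff.mp hreal] at h
    exact self_eq_neg.mp h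
  simpa [hμ0] using (hμ w.embedding).2

lemma norm_sub_mul_norm_sub_conjugate (hμ : IsTotallyNegative (μ ^ 2)) (φ ψ : K →+* ℂ) :
    ‖φ μ - ψ μ‖ * ‖φ μ - conjugate ψ μ‖ =
      |InfinitePlace.mk φ μ ^ 2 - InfinitePlace.mk ψ μ ^ 2| := by
  calc ‖φ μ - ψ μ‖ * ‖φ μ - conjugate ψ μ‖ = ‖φ μ ^ 2 - ψ μ ^ 2‖ := by
        rw [hμ.conjugate_map, ← norm_mul]; ring_nf
    _ = |InfinitePlace.mk φ μ ^ 2 - InfinitePlace.mk ψ μ ^ 2| := by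
        rw [hμ.sq_map_eq, hμ.sq_map_eq, ← Complex.ofReal_sub, Complex.norm_real, Real.norm_eq_abs,
          abs_sub_comm]
        ring_nf

end Field

variable {K : Type*} [Field K] [NumberField K] {μ : K}

lemma trace_sq_eq_sum_infinitePlace (hμ : IsTotallyNegative (μ ^ 2)) :
    ((Algebra.trace ℚ K (μ ^ 2) : ℚ) : ℝ) = -2 * ∑ w : InfinitePlace K, w μ ^ 2 := by
  have := hμ.isTotallyComplex
  have hsum : ((Algebra.trace ℚ K (μ ^ 2) : ℚ) : ℂ) =
      ((∑ φ : K →+* ℂ, -InfinitePlace.mk φ μ ^ 2 : ℝ) : ℂ) := by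
    rw [← eq_ratCast (algebraMap ℚ ℂ), trace_eq_sum_embeddings ℂ,
      ← (RingHom.equivRatAlgHom K ℂ).sum_comp]
    simp [RingHom.equivRatAlgHom_apply, hμ.sq_map_eq]
  rw [sum_comp_mk (fun w ↦ -w μ ^ 2), Finset.sum_neg_distrib] at hsum
  have : ((Algebra.trace ℚ K (μ ^ 2) : ℚ) : ℝ) = 2 • -∑ w : InfinitePlace K, w μ ^ 2 := by
    exact_mod_cast hsum
  rw [this]
  ring

open scoped Classical in
lemma prod_norm_sub_eq_prod_infinitePlace (hμ : IsTotallyNegative (μ ^ 2)) (φ : K →+* ℂ) :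
    ∏ ψ ∈ {φ}ᶜ, ‖φ μ - ψ μ‖ = 2 * InfinitePlace.mk φ μ *
      ∏ v ∈ {InfinitePlace.mk φ}ᶜ, |InfinitePlace.mk φ μ ^ 2 - v μ ^ 2| := by
  have := hμ.isTotallyComplex
  set w := InfinitePlace.mk φ with hw
  have hself : ∏ ψ ∈ {φ}ᶜ with InfinitePlace.mk ψ = w, ‖φ μ - ψ μ‖ = 2 * w μ := by
    have hfiber : ({φ}ᶜ : Finset (K →+* ℂ)).filter (InfinitePlace.mk · = w) = {conjugate φ} := by
      rw [Finset.compl_eq_univ_sdiff, Finset.sdiff_singleton_eq_erase, Finset.filter_erase,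
        filter_mk_eq, Finset.erase_insert (by simpa using (conjugate_ne φ).symm)]
    rw [hfiber, Finset.prod_singleton, hμ.conjugate_map, sub_neg_eq_add, ← two_mul, norm_mul,
      Complex.norm_ofNat, hw, InfinitePlace.apply]
  have hother (v : InfinitePlace K) (hv : v ∈ ({w}ᶜ : Finset _)) :
      ∏ ψ ∈ {φ}ᶜ with InfinitePlace.mk ψ = v, ‖φ μ - ψ μ‖ = |w μ ^ 2 - v μ ^ 2| := by
    obtain ⟨χ, rfl⟩ : ∃ χ, InfinitePlace.mk χ = v := ⟨_, InfinitePlace.mk_embedding v⟩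
    have hne : w ≠ InfinitePlace.mk χ := fun h ↦ by simp [h] at hv
    have hfiber : ({φ}ᶜ : Finset (K →+* ℂ)).filter (InfinitePlace.mk · = InfinitePlace.mk χ) =
        Finset.univ.filter (InfinitePlace.mk · = InfinitePlace.mk χ) := by
      rw [Finset.compl_eq_univ_sdiff, Finset.sdiff_singleton_eq_erase, Finset.filter_erase]
      exact Finset.erase_eq_of_notMem fun h ↦ hne (Finset.mem_filter.mp h).2
    rw [hfiber, prod_filter_mk_eq, hμ.norm_sub_mul_norm_sub_conjugate]
  rw [← Finset.prod_fiberwise _ InfinitePlace.mk, Fintype.prod_eq_mul_prod_compl w, hself,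
    Finset.prod_congr rfl hother]

open scoped Classical in
lemma abs_discr_pow_eq_prod_infinitePlace {n : ℕ} (hn : finrank ℚ K = n)
    (hμ : IsTotallyNegative (μ ^ 2)) :
    ((|Algebra.discr ℚ fun i : Fin n ↦ μ ^ (i : ℕ)| : ℚ) : ℝ) =
      4 ^ Fintype.card (InfinitePlace K) * (∏ w : InfinitePlace K, w μ ^ 2) *
        (∏ w : InfinitePlace K, ∏ v ∈ {w}ᶜ, |w μ ^ 2 - v μ ^ 2|) ^ 2 := by
  have := hμ.isTotallyComplex
  rw [abs_discr_pow_eq_prod_norm_sub hn,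
    Finset.prod_congr rfl fun φ _ ↦ hμ.prod_norm_sub_eq_prod_infinitePlace φ,
    prod_comp_mk (fun w ↦ 2 * w μ * ∏ v ∈ {w}ᶜ, |w μ ^ 2 - v μ ^ 2|), Finset.prod_mul_distrib,
    Finset.prod_mul_distrib, Finset.prod_const, Finset.card_univ, Finset.prod_pow, mul_pow, mul_pow,
    pow_right_comm]
  norm_num

end IsTotallyNegative

theorem stmt_9_general {K : Type*} [Field K] [NumberField K] (hK6 : finrank ℚ K = 6) {μ : K}
    (hμ : IsTotallyNegative (μ ^ 2)) :
    |Algebra.discr ℚ (fun i : Fin 6 ↦ μ ^ (i : ℕ))| ≤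
      (4 / 3 ^ 9 : ℚ) * (-(1/2 : ℚ) * Algebra.trace ℚ K (μ ^ 2)) ^ 15 := by
  classical
  have := hμ.isTotallyComplex
  have hcard : Fintype.card (InfinitePlace K) = 3 := by
    have := two_mul_card_infinitePlace K
    omega
  set B : ℝ := ∑ w : InfinitePlace K, w μ ^ 2 with hB
  have hprod : ∏ w : InfinitePlace K, w μ ^ 2 ≤ (B / 3) ^ 3 := by
    simpa [hcard] using prod_le_arith_mean_pow_card fun w : InfinitePlace K ↦ sq_nonneg (w μ)
  have hdiff : ∏ w : InfinitePlace K, ∏ v ∈ {w}ᶜ, |w μ ^ 2 - v μ ^ 2| ≤ B ^ 6 / 108 :=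
    prod_abs_sub_le_of_card_eq_three hcard fun w ↦ sq_nonneg (w μ)
  rw [← Rat.cast_le (K := ℝ), hμ.abs_discr_pow_eq_prod_infinitePlace hK6, hcard]
  push_cast
  rw [hμ.trace_sq_eq_sum_infinitePlace, ← hB]
  calc (4 : ℝ) ^ 3 * (∏ w : InfinitePlace K, w μ ^ 2) *
        (∏ w : InfinitePlace K, ∏ v ∈ {w}ᶜ, |w μ ^ 2 - v μ ^ 2|) ^ 2
      ≤ 4 ^ 3 * (B / 3) ^ 3 * (B ^ 6 / 108) ^ 2 := by gcongr
    _ = 4 / 3 ^ 9 * (-(1 / 2) * (-2 * B)) ^ 15 := by ring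

/-- Let `μ` be an algebraic integer such that `K = ℚ(μ)` has degree 6
over `ℚ` and `μ²` is totally negative, and set `B = -(1/2)·Tr_{K/ℚ}(μ²)`. Then the
absolute value of the discriminant of the power basis `(1, μ, …, μ⁵)` of `K/ℚ` is at
most `(2¹⁸/3¹⁵)·B¹⁵`. -/
theorem stmt_9
    (K : Type*) [Field K] [NumberField K]
    (hK6 : finrank ℚ K = 6)
    (μ : K)
    (hμint : IsIntegral ℤ μ)
    (hgen : IntermediateField.adjoin ℚ {μ} = ⊤)
    (hμ2neg : ∀ φ : K →+* ℂ, (φ (μ ^ 2)).im = 0 ∧ (φ (μ ^ 2)).re < 0) :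
    |Algebra.discr ℚ (fun i : Fin 6 => μ ^ (i : ℕ))| ≤
      (2 ^ 18 / 3 ^ 15 : ℚ) * (-(1/2 : ℚ) * Algebra.trace ℚ K (μ ^ 2)) ^ 15 := by
  linarith [stmt_9_general hK6 hμ2neg, abs_nonneg (Algebra.discr ℚ fun i : Fin 6 ↦ μ ^ (i : ℕ))]
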